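/- Let K be a finite field of characteristic p and order q with [K : F_p] divisible by 4, and let d be an integer with gcd(d, q − 1) = 1. Then the set {W_{K,d}(a) : a ∈ K^×} is not equal to {0, p·sqrt(q), −p·sqrt(q)}. -/

import Mathlib

open scoped BigOperators Classical

/-- The canonical additive character of a finite field `K` of characteristic `p`:
`ψ_K(x) = exp(2πi · Tr_{K/F_p}(x) / p)`, where `Tr_{K/F_p}` is the absolute trace. -/
noncomputable def canonicalAddChar (p : ℕ) [Fact p.Prime] (K : Type) [Field K] [Fintype K]
    [Algebra (ZMod p) K] (x : K) : ℂ :=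
  Complex.exp (2 * Real.pi * Complex.I * ((Algebra.trace (ZMod p) K x).val : ℂ) / (p : ℂ))

/-- The Weil sum `W_{K,d}(a) = ∑_{x ∈ K} ψ_K(x^d + a·x)`. -/
noncomputable def weilSum (p : ℕ) [Fact p.Prime] (K : Type) [Field K] [Fintype K]
    [Algebra (ZMod p) K] (d : ℤ) (a : K) : ℂ :=
  ∑ x : K, canonicalAddChar p K (x ^ d + a * x)

/-- The value set `{W_{K,d}(a) : a ∈ K^×}` of the Weil sum. -/
noncomputable def weilValues (p : ℕ) [Fact p.Prime] (K : Type) [Field K] [Fintype K]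
    [Algebra (ZMod p) K] (d : ℤ) : Set ℂ :=
  {w : ℂ | ∃ a : K, a ≠ 0 ∧ weilSum p K d a = w}

/-- `d` is degenerate over a finite field of order `q` and characteristic `p` if
`d ≡ p^j (mod q − 1)` for some nonnegative integer `j`. -/
def IsDegenerate (p : ℕ) (q : ℕ) (d : ℤ) : Prop :=
  ∃ j : ℕ, d ≡ (p : ℤ) ^ j [ZMOD (q : ℤ) - 1]


/-- digit sum -/
def dsum (p j : ℕ) : ℕ := (Nat.digits p j).sum

lemma dsum_zero (p : ℕ) : dsum p 0 = 0 := by simp [dsum]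

lemma dsum_add_mul {p : ℕ} (hp : 1 < p) (a b : ℕ) (ha : a < p) : dsum p (a + p * b) = a + dsum p b := by
  unfold dsum
  by_cases h : a = 0 ∧ b = 0
  · obtain ⟨rfl, rfl⟩ := h; simp
  · rw [Nat.digits_add p hp a b ha (by tauto)]; simp

lemma dsum_lt {p : ℕ} (hp : 1 < p) (a : ℕ) (ha : a < p) : dsum p a = a := by
  have := dsum_add_mul hp a 0 ha
  simpa [dsum_zero] using this

lemma dsum_add_pow_mul {p : ℕ} (hp : 1 < p) (r : ℕ) : ∀ (a b : ℕ), a < p ^ r →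
    dsum p (a + p ^ r * b) = dsum p a + dsum p b := by
  induction r with
  | zero => intro a b ha; have : a = 0 := by simpa using ha
            subst this; simp [dsum_zero]
  | succ r ih =>
    intro a b ha
    have h0 : a % p < p := Nat.mod_lt _ (by omega)
    have h1 : a / p < p ^ r := by
      rw [Nat.div_lt_iff_lt_mul (by omega)]; rwa [pow_succ] at ha
    have e1 : a + p ^ (r + 1) * b = a % p + p * (a / p + p ^ r * b) := by
      conv_lhs => rw [← Nat.mod_add_div a p]
      ring
    conv_rhs => rw [← Nat.mod_add_div a p]
    rw [e1, dsum_add_mul hp _ _ h0, dsum_add_mul hp _ _ h0, ih _ _ h1]; ring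

lemma dsum_repeat {p : ℕ} (hp : 1 < p) (r a : ℕ) (ha : a < p ^ r) (m : ℕ) :
    dsum p (a * ∑ i ∈ Finset.range m, (p ^ r) ^ i) = m * dsum p a := by
  induction m with
  | zero => simp [dsum_zero]
  | succ m ih =>
    rw [Finset.sum_range_succ']
    have : a * (∑ k ∈ Finset.range m, (p ^ r) ^ (k + 1) + (p ^ r) ^ 0)
      = a + p ^ r * (a * ∑ i ∈ Finset.range m, (p ^ r) ^ i) := by
      simp only [pow_succ, ← Finset.sum_mul]; ring
    rw [this, dsum_add_pow_mul hp r _ _ ha, ih]; ring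

lemma dsum_modEq {p : ℕ} (hp : 1 < p) (j : ℕ) : j ≡ dsum p j [MOD (p - 1)] := by
  by_cases h : p = 2
  · subst h; simp [Nat.modEq_one]
  · exact Nat.modEq_digits_sum (p-1) p (by
      rw [show p = 1 + (p - 1) by omega]; simp; 
      exact Nat.mod_eq_of_lt (by omega)) j

lemma dsum_pos {p : ℕ} (hp : 1 < p) (j : ℕ) (hj : 0 < j) : 0 < dsum p j := by
  induction j using Nat.strong_induction_on with
  | _ j ih =>
    have h0 : j % p < p := Nat.mod_lt _ (by omega)
    rw [← Nat.mod_add_div j p, dsum_add_mul hp _ _ h0]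
    by_cases h : j % p = 0
    · have : 0 < j / p := Nat.div_pos (Nat.le_of_dvd hj (Nat.dvd_of_mod_eq_zero h)) (by omega)
      have := ih (j / p) (Nat.div_lt_self hj hp) this
      omega
    · omega

lemma four_digits {p : ℕ} (hp : 1 < p) (D : ℕ) (hD : D < p ^ 4) : ∃ a b c e : ℕ,
    a < p ∧ b < p ∧ c < p ∧ e < p ∧ D = a + p * (b + p * (c + p * e)) ∧
      dsum p D = a + b + c + e := by
  have hp0 : 0 < p := by omega
  refine ⟨D % p, D / p % p, D / p / p % p, D / p / p / p, Nat.mod_lt _ hp0, Nat.mod_lt _ hp0,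
    Nat.mod_lt _ hp0, ?_, ?_, ?_⟩
  · rw [Nat.div_div_eq_div_mul, Nat.div_div_eq_div_mul, Nat.div_lt_iff_lt_mul (by positivity)]
    calc D < p ^ 4 := hD
      _ = _ := by ring
  · rw [Nat.mod_add_div, Nat.mod_add_div, Nat.mod_add_div]
  · have h3 : D / p / p / p < p := by
      rw [Nat.div_div_eq_div_mul, Nat.div_div_eq_div_mul, Nat.div_lt_iff_lt_mul (by positivity)]
      calc D < p ^ 4 := hD
        _ = _ := by ring
    conv_lhs => rw [← Nat.mod_add_div D p, ← Nat.mod_add_div (D/p) p, ← Nat.mod_add_div (D/p/p) p]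
    rw [dsum_add_mul hp _ _ (Nat.mod_lt _ hp0), dsum_add_mul hp _ _ (Nat.mod_lt _ hp0),
      dsum_add_mul hp _ _ (Nat.mod_lt _ hp0), dsum_lt hp _ h3]; ring

/-- small: multiples of p-1 -/
lemma modEq_one_cases {p s : ℕ} (hp : 1 < p) (h : 1 ≡ s [MOD (p-1)]) (hs : 0 < s)
    (hlt : s < 1 + 2 * (p - 1)) : s = 1 ∨ s = p := by
  have := (Nat.modEq_iff_dvd' (by omega : 1 ≤ s)).1 h
  obtain ⟨k, hk⟩ := this
  have : k < 2 := by
    by_contra hc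
    have : (p-1) * 2 ≤ (p-1) * k := Nat.mul_le_mul_left _ (by omega)
    omega
  interval_cases k <;> omega

lemma four_lt {p a b c e : ℕ} (ha : a < p) (hb : b < p) (hc : c < p) (he : e < p) :
    a + p * (b + p * (c + p * e)) < p ^ 4 := by
  have h1 : c + p * e + 1 ≤ p ^ 2 := by nlinarith
  have h2 : b + p * (c + p * e) + 1 ≤ p * p ^ 2 := by
    have := Nat.mul_le_mul_left p h1
    rw [mul_add] at this; omega
  have h3 := Nat.mul_le_mul_left p h2
  rw [mul_add] at h3
  have : p * (p * p ^ 2) = p ^ 4 := by ring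
  omega

lemma arith {p : ℕ} (hp : p.Prime) (d : ℕ) (hd1 : 1 ≡ d [MOD (p-1)])
    (hcop : Nat.Coprime d (p ^ 4 - 1))
    (C : ∀ A B : ℕ, 0 < A → A < p ^ 4 - 1 → 0 < B → B < p ^ 4 - 1 → B ≡ d * A [MOD (p ^ 4 - 1)] →
      dsum p B < dsum p A + 2 * (p - 1)) : ∃ k, d ≡ p ^ k [MOD (p ^ 4 - 1)] := by
  have hp1 := hp.one_lt
  have hp2 : 4 ≤ p ^ 2 := by nlinarith
  have hfac : p ^ 4 - 1 = (p ^ 2 - 1) * (1 + p ^ 2) := by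
    obtain ⟨t, ht⟩ : ∃ t, p ^ 2 = t + 1 := ⟨p^2 - 1, by omega⟩
    have : p ^ 4 = (p ^ 2) ^ 2 := by ring
    rw [this, ht]; simp; ring_nf; omega
  have hfac2 : p ^ 2 - 1 = (p - 1) * (p + 1) := by
    obtain ⟨t, rfl⟩ : ∃ t, p = t + 1 := ⟨p - 1, by omega⟩
    simp; ring_nf; omega
  have hN : 15 ≤ p ^ 4 - 1 := by rw [hfac]; have := Nat.mul_le_mul (show 3 ≤ p^2 - 1 by omega) (show 5 ≤ 1 + p^2 by omega); omega
  have hcop2 : Nat.Coprime d (p ^ 2 - 1) := by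
    rw [hfac] at hcop; exact Nat.Coprime.coprime_mul_right_right hcop
  -- step a
  set E := d % (p ^ 2 - 1) with hE
  have hElt : E < p ^ 2 - 1 := Nat.mod_lt _ (by omega)
  have hEpos : 0 < E := by
    rcases Nat.eq_zero_or_pos E with h | h
    · have := Nat.dvd_of_mod_eq_zero h
      have := Nat.eq_one_of_dvd_coprimes hcop2 this dvd_rfl
      omega
    · exact h
  have hEd : E ≡ d [MOD (p^2-1)] := Nat.mod_modEq _ _
  have h12 : dsum p 1 = 1 := dsum_lt hp1 1 hp1
  have dsq : ∀ a b, a < p ^ 2 → dsum p (a + p ^ 2 * b) = dsum p a + dsum p b := fun a b h =>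
    dsum_add_pow_mul hp1 2 a b h
  have hE1 : dsum p E = 1 := by
    have := C (1 + p ^ 2) (E * (1 + p^2)) (by omega)
      (by rw [hfac]; nlinarith [show 3 ≤ p^2 - 1 by omega]) (by positivity)
      (by rw [hfac]; exact Nat.mul_lt_mul_of_pos_right hElt (by omega))
      (by rw [hfac]; exact Nat.ModEq.mul_right' _ hEd)
    have e1 := dsq 1 1 (by omega)
    have e2 := dsq E E (by omega)
    rw [mul_one] at e1
    rw [show E * (1 + p^2) = E + p ^ 2 * E by ring, e1, e2, h12] at this
    have hm : 1 ≡ dsum p E [MOD (p-1)] := by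
      refine (hd1.trans (Nat.ModEq.of_dvd ?_ hEd.symm)).trans (dsum_modEq hp1 E)
      rw [hfac2]; exact dvd_mul_right _ _
    have := modEq_one_cases hp1 hm (dsum_pos hp1 E hEpos) (by omega)
    omega
  -- E = 1 or p
  have hE2 : E = 1 ∨ E = p := by
    have h0 : E / p < p := by rw [Nat.div_lt_iff_lt_mul (by omega)]; nlinarith [Nat.sub_le (p^2) 1]
    have h1 : E % p < p := Nat.mod_lt _ (by omega)
    have e := Nat.mod_add_div E p
    rw [← e, dsum_add_mul hp1 _ _ h1, dsum_lt hp1 _ h0] at hE1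
    rcases Nat.eq_zero_or_pos (E / p) with h | h
    · rw [h] at e hE1; left; omega
    · have h3 : E / p = 1 := by omega
      have h4 : E % p = 0 := by omega
      rw [h3, h4] at e; right; omega
  -- step b
  set D := d % (p ^ 4 - 1) with hD
  have hDlt : D < p ^ 4 - 1 := Nat.mod_lt _ (by omega)
  have hDpos : 0 < D := by
    rcases Nat.eq_zero_or_pos D with h | h
    · have := Nat.dvd_of_mod_eq_zero h
      have := Nat.eq_one_of_dvd_coprimes hcop this dvd_rfl
      omega
    · exact h
  have hDd : D ≡ d [MOD (p^4-1)] := Nat.mod_modEq _ _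
  have hDE : D ≡ E [MOD (p^2-1)] := (Nat.ModEq.of_dvd (by rw [hfac]; exact dvd_mul_right _ _) hDd).trans hEd.symm
  have hs := C 1 D one_pos (by omega) hDpos hDlt (by rw [mul_one]; exact hDd)
  rw [h12] at hs
  have hm : 1 ≡ dsum p D [MOD (p-1)] := by
      refine (hd1.trans (Nat.ModEq.of_dvd ?_ hDd.symm)).trans (dsum_modEq hp1 D)
      rw [hfac, hfac2, mul_assoc]; exact dvd_mul_right _ _
  obtain ⟨a, b, c, e, ha, hb, hc, he, hDe, hds⟩ := four_digits hp1 D (by omega)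
  rcases modEq_one_cases hp1 hm (dsum_pos hp1 D hDpos) hs with h | h
  · rw [hds] at h
    have : (a = 1 ∧ b = 0 ∧ c = 0 ∧ e = 0) ∨ (a = 0 ∧ b = 1 ∧ c = 0 ∧ e = 0) ∨
      (a = 0 ∧ b = 0 ∧ c = 1 ∧ e = 0) ∨ (a = 0 ∧ b = 0 ∧ c = 0 ∧ e = 1) := by omega
    rcases this with ⟨rfl, rfl, rfl, rfl⟩ | ⟨rfl, rfl, rfl, rfl⟩ | ⟨rfl, rfl, rfl, rfl⟩ | ⟨rfl, rfl, rfl, rfl⟩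
    · exact ⟨0, hDd.symm.trans (by rw [hDe]; ring_nf; rfl)⟩
    · exact ⟨1, hDd.symm.trans (by rw [hDe]; ring_nf; rfl)⟩
    · exact ⟨2, hDd.symm.trans (by rw [hDe]; ring_nf; rfl)⟩
    · exact ⟨3, hDd.symm.trans (by rw [hDe]; ring_nf; rfl)⟩
  · exfalso
    rw [hds] at h
    -- reduce mod p^2-1
    have key : (a + c = p ∧ b + e = 0) ∨ (a + c = 0 ∧ b + e = p) := by
      have z : ((p:ℤ) - 1) * (p + 1) ∣ (E : ℤ) - D := by
        have := (Nat.modEq_iff_dvd).1 hDE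
        rw [hfac2] at this; push_cast [hp1.le] at this; exact this
      have zD : (D : ℤ) = p + (p - 1) * (b + e) + (p - 1) * (p + 1) * (c + p * e) := by
        have : (a : ℤ) = p - b - c - e := by omega
        rw [hDe]; push_cast; rw [this]; ring
      have hpz : (p : ℤ) - 1 ≠ 0 := by omega
      rcases hE2 with hh | hh
      · rw [hh, zD] at z
        have : (p:ℤ) + 1 ∣ (b + e + 1) := by
          have z2 : ((p:ℤ) - 1) * (p + 1) ∣ (p - 1) * (b + e + 1) := by
            obtain ⟨k, hk⟩ := z
            exact ⟨-k - (c + p * e), by linear_combination -hk⟩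
          exact (mul_dvd_mul_iff_left hpz).1 z2
        have := Int.le_of_dvd (by positivity) this
        right; omega
      · rw [hh, zD] at z
        have : (p:ℤ) + 1 ∣ (b + e) := by
          have z2 : ((p:ℤ) - 1) * (p + 1) ∣ (p - 1) * (b + e) := by
            obtain ⟨k, hk⟩ := z
            push_cast at hk
            exact ⟨-k - (c + p * e), by linear_combination -hk⟩
          exact (mul_dvd_mul_iff_left hpz).1 z2
        have := Int.eq_zero_of_dvd_of_nonneg_of_lt (by positivity) (by omega) this
        left; omega
    -- the multiplier 1 + p
    have hs1p : dsum p (1 + p) = 2 := by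
      have := dsum_add_mul hp1 1 1 hp1
      rw [mul_one] at this; rw [this, h12]
    have hA : 1 + p < p ^ 4 - 1 := by
      rw [hfac]; nlinarith [show 3 ≤ p^2 - 1 by omega]
    have fin : ∀ x y z w : ℕ, x < p → y < p → z < p → w < p → x + y + z + w = 2 * p →
        x + p * (y + p * (z + p * w)) ≡ d * (1 + p) [MOD (p^4-1)] → False := by
      intro x y z w hx hy hz hw hxy hmod
      set B := x + p * (y + p * (z + p * w)) with hB
      have hBs : dsum p B = 2 * p := by
        rw [hB, dsum_add_mul hp1 _ _ hx, dsum_add_mul hp1 _ _ hy, dsum_add_mul hp1 _ _ hz, dsum_lt hp1 _ hw]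
        omega
      have hBle : B ≤ p ^ 4 - 1 := by
        have : B < p ^ 4 := by
          exact four_lt hx hy hz hw
        omega
      have hB0 : 0 < B := by
        rcases Nat.eq_zero_or_pos B with h0 | h0
        · rw [h0, dsum_zero] at hBs; omega
        · exact h0
      rcases hBle.lt_or_eq with hlt | heq
      · have := C (1 + p) B (by omega) hA hB0 hlt hmod
        omega
      · rw [heq] at hmod
        have : p ^ 4 - 1 ∣ d * (1 + p) := by
          have := hmod.symm.trans (show p^4-1 ≡ 0 [MOD (p^4-1)] by simp [Nat.ModEq])
          exact (Nat.modEq_zero_iff_dvd).1 this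
        have := (Nat.Coprime.symm hcop).dvd_of_dvd_mul_left this
        have := Nat.le_of_dvd (by omega) this
        omega
    rcases key with ⟨h1, h2⟩ | ⟨h1, h2⟩
    · have hb0 : b = 0 := by omega
      have he0 : e = 0 := by omega
      refine fin a a c c ha ha hc hc (by omega) ?_
      refine Nat.ModEq.trans ?_ (Nat.ModEq.mul_right _ hDd)
      rw [hDe, hb0, he0]; ring_nf; rfl
    · have hb0 : a = 0 := by omega
      have he0 : c = 0 := by omega
      refine fin e b b e he hb hb he (by omega) ?_
      refine Nat.ModEq.trans ?_ (Nat.ModEq.mul_right _ hDd)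
      rw [Nat.modEq_iff_dvd]
      refine ⟨e, ?_⟩
      rw [hDe, hb0, he0]; push_cast [show 1 ≤ p^4 by omega]; ring

section Stick

set_option linter.unusedSectionVars false

lemma sum_sdiff_zero_one {K R : Type*} [Field K] [Fintype K] [AddCommGroup R] (f : K → R) :
    ∑ x ∈ (Finset.univ \ {0, 1} : Finset K), f x = ∑ x, f x - f 0 - f 1 := by
  have h := Finset.sum_sdiff (f := f) (Finset.subset_univ ({0, 1} : Finset K))
  rw [Finset.sum_pair zero_ne_one] at h
  rw [← h]; abel

lemma field_sum {K : Type*} [Field K] [Fintype K] (hq : 2 < Fintype.card K) (k : ℕ)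
    (hk : k + 1 < Fintype.card K) :
    ∑ x ∈ (Finset.univ \ {0, 1} : Finset K), (x⁻¹) ^ k * (1 - x)⁻¹ = -((k : K) + 1) := by
  have h1 : ∑ x ∈ (Finset.univ \ {0, 1} : Finset K), (x⁻¹) ^ k * (1 - x)⁻¹ =
      ∑ x ∈ (Finset.univ \ {0, 1} : Finset K), (∑ i ∈ Finset.range (k + 1), x ^ i + (x - 1)⁻¹) := by
    refine Finset.sum_nbij' (fun x => x⁻¹) (fun x => x⁻¹) ?_ ?_ ?_ ?_ ?_
    · intro x hx; simpa using hx
    · intro x hx; simpa using hx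
    · intro x hx; simp
    · intro x hx; simp
    · intro x hx
      simp only [Finset.mem_sdiff, Finset.mem_univ, Finset.mem_insert, Finset.mem_singleton,
        true_and, not_or] at hx
      obtain ⟨h0, h1⟩ := hx
      have h1' : (1 : K) - x ≠ 0 := sub_ne_zero.2 (Ne.symm h1)
      have h2 : x⁻¹ - 1 ≠ 0 := by
        intro h
        have : x⁻¹ = 1 := sub_eq_zero.1 h
        exact h1 (inv_eq_one.1 this)
      have h3 : x⁻¹ ≠ 1 := fun h => h1 (inv_eq_one.1 h)
      rw [geom_sum_eq h3]
      have e : x⁻¹ - 1 = (1 - x) * x⁻¹ := by field_simp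
      rw [e]
      field_simp
      ring_nf
      rw [mul_inv_cancel₀ h0, one_mul]
  have hs1 : ∑ x : K, x = 0 := by
    have := FiniteField.sum_pow_lt_card_sub_one K 1 (by omega)
    simpa using this
  have hsinv : ∑ x : K, (x - 1)⁻¹ = 0 := by
    rw [← hs1]
    exact Fintype.sum_bijective (fun x : K => (x - 1)⁻¹)
      ((inv_involutive.bijective).comp (Equiv.subRight (1:K)).bijective) _ _ (fun x => rfl)
  rw [h1, Finset.sum_add_distrib, sum_sdiff_zero_one, sum_sdiff_zero_one, hsinv, Finset.sum_comm]
  rw [Finset.sum_eq_zero (s := Finset.range (k+1)) (f := fun i => ∑ x : K, x ^ i)]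
  · simp [zero_pow_eq]; ring
  · intro i hi
    exact FiniteField.sum_pow_lt_card_sub_one K i (by have := Finset.mem_range.1 hi; omega)

variable {p : ℕ} [Fact p.Prime] {K : Type*} [Field K] [Fintype K] [Algebra (ZMod p) K]
  {R κ : Type*} [CommRing R] [IsDomain R] [Field κ] (res : R →+* κ) [IsLocalHom res]
  (ι : K →+* κ) (ω : MulChar K R)

lemma isUnit_of_res {x : R} (h : res x ≠ 0) : IsUnit x :=
  isUnit_of_map_unit res x (isUnit_iff_ne_zero.2 h)

lemma res_inv_pow (hω : ∀ x, res (ω x) = ι x) (j : ℕ) (x : K) (hx : x ≠ 0) :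
    res ((ω⁻¹ ^ j) x) = ι ((x⁻¹) ^ j) := by
  have : (ω⁻¹ ^ j) x = (ω⁻¹ x) ^ j := by
    have := MulChar.pow_apply_coe (ω⁻¹) j (Units.mk0 x hx)
    simpa using this
  rw [this, MulChar.inv_apply', map_pow, hω, map_pow]

lemma jacobi_unit [CharP K p] (hω : ∀ x, res (ω x) = ι x) (hq : 2 < Fintype.card K) (k : ℕ)
    (hk : k + 1 < Fintype.card K) (hpk : ¬ p ∣ k + 1) :
    IsUnit (jacobiSum (ω⁻¹ ^ k) ω⁻¹) := by
  apply isUnit_of_res res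
  have : res (jacobiSum (ω⁻¹ ^ k) ω⁻¹) = ι (-((k : K) + 1)) := by
    rw [← field_sum hq k hk, jacobiSum_eq_sum_sdiff, map_sum, map_sum]
    refine Finset.sum_congr (by congr!) fun x hx => ?_
    simp only [Finset.mem_sdiff, Finset.mem_univ, Finset.mem_insert, Finset.mem_singleton,
        true_and, not_or] at hx
    rw [map_mul, res_inv_pow res ι ω hω k x hx.1, map_mul]
    congr 1
    rw [MulChar.inv_apply', hω]
  rw [this]
  intro h
  rw [map_eq_zero, neg_eq_zero] at h
  apply hpk
  rw [← CharP.cast_eq_zero_iff K p]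
  push_cast; exact h

variable (ψ : AddChar K R) (ζ : R)

lemma psi_frob [CharP K p] (hψ : ∀ x, ψ x = ζ ^ (Algebra.trace (ZMod p) K x).val) (x : K) :
    ψ (x ^ p) = ψ x := by
  rw [hψ, hψ]
  have : Algebra.trace (ZMod p) K (x ^ p) = Algebra.trace (ZMod p) K x := by
    have := Algebra.trace_eq_of_algEquiv (FiniteField.frobeniusAlgEquivOfAlgebraic (ZMod p) K) x
    simpa [FiniteField.frobeniusAlgEquivOfAlgebraic, ZMod.card] using this
  rw [this]

lemma gauss_frob [CharP K p] (hψ : ∀ x, ψ x = ζ ^ (Algebra.trace (ZMod p) K x).val)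
    (χ : MulChar K R) : gaussSum (χ ^ p) ψ = gaussSum χ ψ := by
  have hp : p ≠ 0 := (Fact.out : p.Prime).ne_zero
  unfold gaussSum
  refine Fintype.sum_bijective (fun x : K => x ^ p) ?_ _ _ fun x => ?_
  · exact Finite.injective_iff_bijective.1 (frobenius_inj K p)
  · rw [MulChar.pow_apply' _ hp, map_pow, psi_frob ψ ζ hψ]

lemma res_zeta [CharP κ p] (hζ : ζ ^ p = 1) : res ζ = 1 := by
  have : (res ζ) ^ p = 1 := by rw [← map_pow, hζ, map_one]
  have h2 : (res ζ - 1) ^ p = 0 := by rw [sub_pow_char, this]; simp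
  exact sub_eq_zero.1 (pow_eq_zero_iff (Fact.out : p.Prime).ne_zero |>.1 h2)

lemma gauss_base [CharP K p] [CharP κ p] (hω : ∀ x, res (ω x) = ι x)
    (hω1 : ω⁻¹ ≠ 1) (hζ : ζ ^ p = 1)
    (hψ : ∀ x, ψ x = ζ ^ (Algebra.trace (ZMod p) K x).val) :
    Associated (gaussSum ω⁻¹ ψ) (ζ - 1) := by
  have hp := (Fact.out : p.Prime)
  have h0 : ∑ x, ω⁻¹ x = 0 := MulChar.sum_eq_zero_of_ne_one hω1
  set S := ∑ x, ω⁻¹ x * ∑ i ∈ Finset.range (Algebra.trace (ZMod p) K x).val, ζ ^ i with hS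
  have hG : gaussSum ω⁻¹ ψ = S * (ζ - 1) := by
    have : gaussSum ω⁻¹ ψ = gaussSum ω⁻¹ ψ - ∑ x, ω⁻¹ x := by rw [h0, sub_zero]
    rw [this, gaussSum, ← Finset.sum_sub_distrib, hS, Finset.sum_mul]
    refine Finset.sum_congr rfl fun x _ => ?_
    rw [mul_assoc, geom_sum_mul, hψ]; ring
  have hU : IsUnit S := by
    apply isUnit_of_res res
    have : res S = ι (∑ x : K, x⁻¹ * algebraMap (ZMod p) K (Algebra.trace (ZMod p) K x)) := by
      rw [hS, map_sum, map_sum]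
      refine Finset.sum_congr rfl fun x _ => ?_
      rw [map_mul, map_mul, MulChar.inv_apply', hω, map_sum]
      congr 1
      simp only [map_pow, res_zeta res ζ hζ, one_pow, Finset.sum_const, Finset.card_range, nsmul_eq_mul, mul_one]
      conv_rhs => rw [← ZMod.natCast_zmod_val (Algebra.trace (ZMod p) K x)]
      rw [map_natCast, map_natCast]
    rw [this]
    have hfr : Fintype.card K = p ^ Module.finrank (ZMod p) K := by
      rw [Module.card_eq_pow_finrank (K := ZMod p), ZMod.card]
    have hn : 0 < Module.finrank (ZMod p) K := Module.finrank_pos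
    have hval : ∑ x : K, x⁻¹ * algebraMap (ZMod p) K (Algebra.trace (ZMod p) K x) = -1 := by
      have e : ∀ x : K, x⁻¹ * algebraMap (ZMod p) K (Algebra.trace (ZMod p) K x) =
          ∑ i ∈ Finset.range (Module.finrank (ZMod p) K), x⁻¹ * x ^ (p ^ i) := by
        intro x
        rw [FiniteField.algebraMap_trace_eq_sum_pow, Finset.mul_sum, Nat.card_zmod]
      simp_rw [e]
      rw [Finset.sum_comm]
      obtain ⟨m, hm⟩ : ∃ m, Module.finrank (ZMod p) K = m + 1 := ⟨_, (Nat.succ_pred_eq_of_pos hn).symm⟩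
      rw [hm, Finset.sum_range_succ', Finset.sum_eq_zero, zero_add]
      · have : ∀ x : K, x⁻¹ * x ^ p ^ 0 = if x = 0 then 0 else 1 := by
          intro x; split_ifs with h
          · simp [h]
          · simp [h]
        simp_rw [this]
        have e2 : ∀ x : K, (if x = 0 then (0:K) else 1) = 1 - if x = 0 then 1 else 0 := by
          intro x; split_ifs <;> simp
        simp_rw [e2]
        simp
      · intro i hi
        have hi := Finset.mem_range.1 hi
        have h1 : 1 < p ^ (i + 1) := Nat.one_lt_pow (by omega) hp.one_lt
        have : ∀ x : K, x⁻¹ * x ^ p ^ (i + 1) = x ^ (p ^ (i+1) - 1) := by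
          intro x
          by_cases h : x = 0
          · subst h; rw [zero_pow (by omega : p ^ (i+1) - 1 ≠ 0), inv_zero, zero_mul]
          · rw [inv_mul_eq_iff_eq_mul₀ h, ← pow_succ']; congr 1; omega
        simp_rw [this]
        apply FiniteField.sum_pow_lt_card_sub_one
        rw [hfr, hm]
        have : p ^ (i + 1) < p ^ (m + 1) := Nat.pow_lt_pow_right hp.one_lt (by omega)
        omega
    rw [hval]; simp
  rw [hG]
  obtain ⟨u, hu⟩ := hU
  rw [← hu, mul_comm]
  exact (associated_mul_unit_right _ _ u.isUnit).symm

lemma stickelberger [CharP K p] [CharP κ p] (hω : ∀ x, res (ω x) = ι x)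
    (hq : 2 < Fintype.card K) (hω1 : ∀ j, 0 < j → j < Fintype.card K - 1 → ω⁻¹ ^ j ≠ 1)
    (hζ : ζ ^ p = 1) (hψ1 : ψ ≠ 1)
    (hψ : ∀ x, ψ x = ζ ^ (Algebra.trace (ZMod p) K x).val) (j : ℕ) (hj : j < Fintype.card K - 1) :
    Associated (gaussSum (ω⁻¹ ^ j) ψ) ((ζ - 1) ^ dsum p j) := by
  have hp := (Fact.out : p.Prime)
  induction j using Nat.strong_induction_on with
  | _ j ih =>
    rcases Nat.eq_zero_or_pos j with rfl | hj0
    · rw [pow_zero, dsum_zero, pow_zero, gaussSum_one_left hψ1]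
      exact (Associated.refl _).neg_left
    by_cases hpj : p ∣ j
    · obtain ⟨k, rfl⟩ := hpj
      have hk : 0 < k := Nat.pos_of_mul_pos_left hj0
      have hlt : k < p * k := by nlinarith [hp.one_lt]
      have := dsum_add_mul hp.one_lt 0 k hp.pos
      rw [zero_add, zero_add] at this
      rw [this, mul_comm, pow_mul, gauss_frob ψ ζ hψ]
      exact ih k hlt (by omega)
    · obtain ⟨k, rfl⟩ : ∃ k, j = k + 1 := ⟨j - 1, by omega⟩
      have hd : dsum p (k + 1) = dsum p k + 1 := by
        have h0 : (k+1) % p ≠ 0 := fun h => hpj (Nat.dvd_of_mod_eq_zero h)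
        have h1 : (k+1) % p < p := Nat.mod_lt _ hp.pos
        have e := Nat.mod_add_div (k+1) p
        obtain ⟨r, hr⟩ : ∃ r, (k+1) % p = r + 1 := ⟨(k+1) % p - 1, by omega⟩
        rw [hr] at e h1
        have e2 : k = r + p * ((k+1)/p) := by omega
        conv_lhs => rw [← e]
        conv_rhs => rw [e2]
        rw [dsum_add_mul hp.one_lt _ _ h1, dsum_add_mul hp.one_lt _ _ (by omega)]; omega
      have hne : ω⁻¹ ^ k * ω⁻¹ ≠ 1 := by rw [← pow_succ]; exact hω1 _ hj0 hj
      have hJ := jacobiSum_mul_nontrivial hne ψ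
      have hu := jacobi_unit res ι ω hω hq k (by omega) hpj
      have hb := gauss_base res ι ω ψ ζ hω (by simpa using hω1 1 one_pos (by omega)) hζ hψ
      have hi := ih k (by omega) (by omega)
      rw [hd, pow_succ, pow_succ]
      refine (associated_mul_unit_right _ _ hu).trans ?_
      rw [hJ]
      exact hi.mul_mul hb

lemma assoc_p {R κ : Type*} [CommRing R] [IsDomain R] [Field κ] (res : R →+* κ) [IsLocalHom res]
    (ζ : R) [CharP κ p] (hζ : IsPrimitiveRoot ζ p) : Associated (p : R) ((ζ - 1) ^ (p - 1)) := by
  have hp := (Fact.out : p.Prime)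
  have h1 : (p : R) = ∏ μ ∈ primitiveRoots p R, (1 - μ) := by
    have := Polynomial.eval_one_cyclotomic_prime (R := R) (p := p)
    rw [Polynomial.cyclotomic_eq_prod_X_sub_primitiveRoots hζ, Polynomial.eval_prod] at this
    rw [← this]; simp
  have hcard : (primitiveRoots p R).card = p - 1 := by
    rw [hζ.card_primitiveRoots, Nat.totient_prime hp]
  rw [h1, ← hcard, ← Finset.prod_const]
  refine Associated.prod _ _ _ fun μ hμ => ?_
  have hμ := isPrimitiveRoot_of_mem_primitiveRoots hμ
  obtain ⟨i, hi, hco, rfl⟩ := (hζ.isPrimitiveRoot_iff).1 hμ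
  have : (1 - ζ ^ i) = -((ζ - 1) * ∑ k ∈ Finset.range i, ζ ^ k) := by rw [mul_geom_sum]; ring
  rw [this]
  refine Associated.neg_left ?_
  refine (associated_mul_unit_right _ _ ?_).symm
  apply isUnit_of_res res
  simp only [map_sum, map_pow, res_zeta res ζ hζ.pow_eq_one, one_pow, Finset.sum_const, Finset.card_range, nsmul_eq_mul, mul_one]
  rw [Ne, CharP.cast_eq_zero_iff κ p]
  intro h
  have := Nat.eq_one_of_dvd_coprimes hco h dvd_rfl
  exact hp.one_lt.ne' this

end Stick

section Weil

set_option linter.unusedSectionVars false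

variable {p : ℕ} [Fact p.Prime] {K : Type*} [Field K] [Fintype K] [Algebra (ZMod p) K]
  {R κ : Type*} [CommRing R] [IsDomain R] [Field κ]

lemma pow_bij {d : ℕ} (hcop : Nat.Coprime d (Fintype.card K - 1)) (hd : 0 < d) :
    Function.Bijective (fun x : K => x ^ d) := by
  apply Finite.injective_iff_bijective.1
  intro x y hxy
  simp only at hxy
  by_cases hx : x = 0
  · subst hx
    rw [zero_pow hd.ne'] at hxy
    exact ((pow_eq_zero_iff hd.ne').1 hxy.symm).symm
  have hy : y ≠ 0 := by
    rintro rfl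
    rw [zero_pow hd.ne'] at hxy
    exact hx ((pow_eq_zero_iff hd.ne').1 hxy)
  have h1 : (x / y) ^ d = 1 := by rw [div_pow, hxy, div_self (pow_ne_zero _ hy)]
  have h2 : (x / y) ^ (Fintype.card K - 1) = 1 :=
    FiniteField.pow_card_sub_one_eq_one _ (div_ne_zero hx hy)
  have := pow_gcd_eq_one.2 ⟨h1, h2⟩
  rw [Nat.Coprime.gcd_eq_one hcop, pow_one] at this
  exact (div_eq_one_iff_eq hy).1 this

/-- Weil sum in a general ring -/
def wsum (ψ : AddChar K R) (d : ℕ) (a : K) : R := ∑ x, ψ (x ^ d + a * x)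

variable (ψ : AddChar K R)

lemma weil_mellin {d : ℕ} (hcop : Nat.Coprime d (Fintype.card K - 1)) (hd : 0 < d)
    (χ η : MulChar K R) (hχ : χ ≠ 1) (h : χ = η ^ d) :
    ∑ a, χ a * wsum ψ d a = gaussSum χ ψ * gaussSum η⁻¹ ψ := by
  have h1 : ∀ x : K, ∑ a, χ a * ψ (a * x) = χ⁻¹ x * gaussSum χ ψ := by
    intro x
    by_cases hx : x = 0
    · subst hx
      simp [MulChar.sum_eq_zero_of_ne_one hχ, MulChar.map_zero]
    · have := gaussSum_mulShift_eq χ ψ (Units.mk0 x hx)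
      simp only [Units.val_mk0] at this
      rw [← this, gaussSum]
      refine Finset.sum_congr rfl fun a _ => ?_
      rw [AddChar.mulShift_apply, mul_comm a]
  calc ∑ a, χ a * wsum ψ d a = ∑ x, ψ (x ^ d) * ∑ a, χ a * ψ (a * x) := by
        simp only [wsum, Finset.mul_sum]
        rw [Finset.sum_comm]
        refine Finset.sum_congr rfl fun x _ => Finset.sum_congr rfl fun a _ => ?_
        rw [AddChar.map_add_eq_mul]; ring
    _ = gaussSum χ ψ * ∑ x, η⁻¹ (x ^ d) * ψ (x ^ d) := by
        rw [Finset.mul_sum]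
        refine Finset.sum_congr rfl fun x _ => ?_
        rw [h1, h, map_pow η⁻¹, ← inv_pow, MulChar.pow_apply' _ hd.ne']; ring
    _ = _ := by
        congr 1
        exact Fintype.sum_bijective _ (pow_bij hcop hd) _ _ fun x => rfl

lemma cond_dvd {d : ℕ} (hcop : Nat.Coprime d (Fintype.card K - 1)) (hd : 0 < d)
    (hψ : ψ.IsPrimitive) (χ η : MulChar K R) (hχ : χ ≠ 1) (h : χ = η ^ d) (c : R)
    (hW : ∀ a, c ∣ wsum ψ d a) :
    c * gaussSum χ⁻¹ ψ ∣ gaussSum η⁻¹ ψ * (Fintype.card K : R) := by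
  have h1 : c ∣ gaussSum χ ψ * gaussSum η⁻¹ ψ := by
    rw [← weil_mellin ψ hcop hd χ η hχ h]
    exact Finset.dvd_sum fun a _ => Dvd.dvd.mul_left (hW a) _
  have h2 := gaussSum_mul_gaussSum_eq_card hχ hψ
  have h3 := mul_gaussSum_inv_eq_gaussSum χ⁻¹ ψ
  have h4 : χ⁻¹ (-1) * χ⁻¹ (-1) = 1 := by rw [← map_mul]; simp
  have h5 : gaussSum χ ψ * gaussSum χ⁻¹ ψ = χ⁻¹ (-1) * Fintype.card K := by
    rw [← h2, ← h3]; ring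
  obtain ⟨k, hk⟩ := h1
  refine ⟨χ⁻¹ (-1) * k, ?_⟩
  calc gaussSum η⁻¹ ψ * (Fintype.card K : R)
      = gaussSum η⁻¹ ψ * (χ⁻¹ (-1) * (χ⁻¹ (-1) * (Fintype.card K : R))) := by
        rw [← mul_assoc (χ⁻¹ (-1)), h4, one_mul]
    _ = χ⁻¹ (-1) * gaussSum χ⁻¹ ψ * (gaussSum χ ψ * gaussSum η⁻¹ ψ) := by
        rw [← h5]; ring
    _ = _ := by rw [hk]; ring

lemma sum_psi (hψ : ψ.IsPrimitive) (y : K) :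
    ∑ a, ψ (a * y) = if y = 0 then (Fintype.card K : R) else 0 := by
  have := AddChar.sum_mulShift y hψ
  rw [this]; split_ifs <;> simp

lemma first_moment (hψ : ψ.IsPrimitive) {d : ℕ} (hd : 0 < d) :
    ∑ a, wsum ψ d a = Fintype.card K := by
  simp only [wsum]
  rw [Finset.sum_comm]
  have : ∀ x : K, ∑ a, ψ (x ^ d + a * x) = if x = 0 then (Fintype.card K : R) else 0 := by
    intro x
    simp_rw [AddChar.map_add_eq_mul, ← Finset.mul_sum, sum_psi ψ hψ]
    split_ifs with h
    · subst h; simp [zero_pow hd.ne']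
    · simp
  simp_rw [this]; simp

lemma third_moment (hψ : ψ.IsPrimitive) {d : ℕ} (hcop : Nat.Coprime d (Fintype.card K - 1)) (hd : 0 < d) :
    ∑ a, wsum ψ d a ^ 3 = (Fintype.card K : R) ^ 2 *
      ((Finset.univ.filter fun u : K => 1 + u ^ d + (-1 - u) ^ d = 0).card : R) := by
  have hneg : ∀ y : K, y ^ d + (-y) ^ d = 0 := by
    intro y
    rcases neg_one_pow_eq_or K d with h | h
    · have : (-1 : K) = 1 := (pow_bij hcop hd).1 (by simpa using h)
      rw [neg_pow, h, ← this]; ring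
    · rw [neg_pow, h]; ring
  have hsum0 : ∀ e : K, ∑ x : K, ψ (x ^ d * e) = if e = 0 then (Fintype.card K : R) else 0 := by
    intro e
    rw [← sum_psi ψ hψ e]
    exact Fintype.sum_bijective _ (pow_bij hcop hd) _ _ fun x => rfl
  have h1 : ∑ a, wsum ψ d a ^ 3 =
      (Fintype.card K : R) * ∑ x : K, ∑ y : K, ψ (x ^ d + y ^ d + (-x - y) ^ d) := by
    have e1 : ∀ a, wsum ψ d a ^ 3 = ∑ x : K, ∑ y : K, ∑ z : K,
        ψ (x ^ d + y ^ d + z ^ d) * ψ (a * (x + y + z)) := by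
      intro a
      have : wsum ψ d a ^ 3 = wsum ψ d a * (wsum ψ d a * wsum ψ d a) := by ring
      rw [this]
      simp only [wsum]
      rw [Finset.sum_mul]
      refine Finset.sum_congr rfl fun x _ => ?_
      rw [Finset.sum_mul_sum, Finset.mul_sum]
      refine Finset.sum_congr rfl fun y _ => ?_
      rw [Finset.mul_sum]
      refine Finset.sum_congr rfl fun z _ => ?_
      simp only [← AddChar.map_add_eq_mul]
      congr 1; ring
    simp_rw [e1]
    rw [Finset.sum_comm, Finset.mul_sum]
    refine Finset.sum_congr rfl fun x _ => ?_
    rw [Finset.sum_comm, Finset.mul_sum]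
    refine Finset.sum_congr rfl fun y _ => ?_
    rw [Finset.sum_comm]
    simp_rw [← Finset.mul_sum, sum_psi ψ hψ]
    rw [Finset.sum_eq_single (-x - y)]
    · rw [if_pos (by ring)]; ring
    · intro z _ hz
      rw [if_neg, mul_zero]
      intro h; apply hz; linear_combination h
    · simp
  rw [h1, pow_two, mul_assoc]
  congr 1
  -- inner sum
  have h2 : ∀ x : K, ∑ y : K, ψ (x ^ d + y ^ d + (-x - y) ^ d) =
      ∑ u : K, ψ (x ^ d * (1 + u ^ d + (-1 - u) ^ d)) +
        if x = 0 then ((Fintype.card K : R) - Fintype.card K) else 0 := by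
    intro x
    by_cases hx : x = 0
    · subst hx
      simp [zero_pow hd.ne', hneg]
    · rw [if_neg hx, add_zero]
      symm
      refine Fintype.sum_bijective (fun u => x * u) (mulLeft_bijective₀ x hx) _ _ fun u => ?_
      congr 1
      rw [mul_add, mul_add, mul_one, ← mul_pow, ← mul_pow]; congr 2; ring
  simp_rw [h2, sub_self, ite_self, add_zero]
  rw [Finset.sum_comm]
  simp_rw [hsum0]
  rw [← Finset.sum_filter, Finset.sum_const, nsmul_eq_mul, mul_comm]

end Weil

section Core

set_option linter.unusedSectionVars false

variable {p : ℕ} [Fact p.Prime] {K : Type*} [Field K] [Fintype K] [Algebra (ZMod p) K]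
  {R κ : Type*} [CommRing R] [IsDomain R] [Field κ] (res : R →+* κ) [IsLocalHom res]
  (ι : K →+* κ) (ω : MulChar K R)

lemma omega_order (hω : ∀ x, res (ω x) = ι x) (j : ℕ) (h : ω ^ j = 1) :
    Fintype.card K - 1 ∣ j := by
  obtain ⟨g, hg⟩ := IsCyclic.exists_generator (α := Kˣ)
  have h1 := orderOf_eq_card_of_forall_mem_zpowers hg
  rw [Nat.card_eq_fintype_card, Fintype.card_units] at h1
  rw [← h1]
  apply orderOf_dvd_of_pow_eq_one
  have h2 : (ω ^ j) (g : K) = 1 := by rw [h]; simp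
  rw [MulChar.pow_apply_coe] at h2
  have h3 : ι ((g : K) ^ j) = ι 1 := by rw [map_pow, ← hω, ← map_pow, h2]; simp
  have := ι.injective h3
  ext
  simpa using this

lemma omega_pow_eq (a b : ℕ) (h : a ≡ b [MOD (Fintype.card K - 1)]) : ω ^ a = ω ^ b := by
  have h1 : ω ^ (Fintype.card K - 1) = 1 := by
    have := MulChar.pow_card_eq_one ω
    rwa [Fintype.card_units] at this
  rw [← pow_mod_orderOf, ← pow_mod_orderOf ω b]
  congr 1
  exact h.of_dvd (orderOf_dvd_of_pow_eq_one h1)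

variable (ψ : AddChar K R) (ζ : R)

lemma dsum_ineq [CharP K p] [CharP κ p] [CharZero R] (hω : ∀ x, res (ω x) = ι x)
    (hζ : IsPrimitiveRoot ζ p) (hψ1 : ψ ≠ 1)
    (hψ : ∀ x, ψ x = ζ ^ (Algebra.trace (ZMod p) K x).val)
    (n e : ℕ) (hn : Fintype.card K = p ^ n) (hq : 2 < Fintype.card K)
    {d : ℕ} (hcop : Nat.Coprime d (Fintype.card K - 1)) (hd : 0 < d)
    (hW : ∀ a, (p : R) ^ e ∣ wsum ψ d a) (j j' : ℕ) (hj : 0 < j) (hj1 : j < Fintype.card K - 1)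
    (hj' : 0 < j') (hj'1 : j' < Fintype.card K - 1) (hjj : j' ≡ d * j [MOD (Fintype.card K - 1)]) :
    (p - 1) * e + dsum p j' ≤ dsum p j + (p - 1) * n := by
  have hp := (Fact.out : p.Prime)
  have hω1 : ∀ j, 0 < j → j < Fintype.card K - 1 → ω ^ j ≠ 1 := by
    intro j h0 h1 h2
    exact absurd (Nat.le_of_dvd h0 (omega_order res ι ω hω j h2)) (by omega)
  have hω2 : ∀ j, 0 < j → j < Fintype.card K - 1 → ω⁻¹ ^ j ≠ 1 := by
    intro j h0 h1 h2
    rw [inv_pow, inv_eq_one] at h2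
    exact hω1 j h0 h1 h2
  have S := stickelberger res ι ω ψ ζ hω hq hω2 hζ.pow_eq_one hψ1 hψ
  have hP := assoc_p (p := p) res ζ hζ
  have key := cond_dvd ψ hcop hd (AddChar.IsPrimitive.of_ne_one hψ1) (ω ^ j') (ω ^ j)
    (hω1 j' hj' hj'1) (by rw [← pow_mul]; exact omega_pow_eq ω _ _ (by rwa [mul_comm d] at hjj)) _ hW
  rw [← inv_pow, ← inv_pow, hn] at key
  push_cast at key
  have a1 : Associated ((p : R) ^ e * gaussSum (ω⁻¹ ^ j') ψ)
      ((ζ - 1) ^ ((p - 1) * e + dsum p j')) := by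
    rw [pow_add, pow_mul]
    exact (hP.pow_pow).mul_mul (S j' hj'1)
  have a2 : Associated (gaussSum (ω⁻¹ ^ j) ψ * (p : R) ^ n)
      ((ζ - 1) ^ (dsum p j + (p - 1) * n)) := by
    rw [pow_add, pow_mul]
    exact (S j hj1).mul_mul (hP.pow_pow)
  have key2 := (a1.symm.dvd.trans key).trans a2.dvd
  refine (pow_dvd_pow_iff ?_ ?_).1 key2
  · intro h
    exact hζ.ne_one hp.one_lt (sub_eq_zero.1 h)
  · intro h
    have h1 := hP.symm.isUnit (h.pow _)
    have h2 := h1.map res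
    simp at h2

lemma wsum_conj [CharZero R] (hζ : IsPrimitiveRoot ζ p)
    (hψ : ∀ x, ψ x = ζ ^ (Algebra.trace (ZMod p) K x).val)
    {d : ℕ} (a : K) (w : ℤ) (hw : wsum ψ d a = w) (k : ℕ) (hk : k.Coprime p) :
    ∑ x, ψ ((k : K) * (x ^ d + a * x)) = w := by
  have hp := (Fact.out : p.Prime)
  let f : Polynomial ℤ := ∑ x : K, Polynomial.X ^ (Algebra.trace (ZMod p) K (x ^ d + a * x)).val
    - Polynomial.C w
  have hf : ∀ y : R, Polynomial.aeval y f =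
      ∑ x : K, y ^ (Algebra.trace (ZMod p) K (x ^ d + a * x)).val - (w : R) := by
    intro y; simp [f]
  have h1 : Polynomial.aeval ζ f = 0 := by
    rw [hf, sub_eq_zero, ← hw, wsum]
    simp_rw [hψ]
  have h2 := minpoly.isIntegrallyClosed_dvd (hζ.isIntegral hp.pos) h1
  rw [hζ.minpoly_eq_pow_coprime hk] at h2
  have h3 : Polynomial.aeval (ζ ^ k) f = 0 := by
    obtain ⟨g, hg⟩ := h2
    rw [hg, map_mul, minpoly.aeval, zero_mul]
  rw [hf, sub_eq_zero] at h3
  rw [← h3]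
  refine Finset.sum_congr rfl fun x _ => ?_
  rw [← nsmul_eq_mul, AddChar.map_nsmul_eq_pow, hψ, ← pow_mul, ← pow_mul, mul_comm]

lemma d_modEq_one [CharP K p] [CharZero R] (hω : ∀ x, res (ω x) = ι x)
    (hζ : IsPrimitiveRoot ζ p) (hψ1 : ψ ≠ 1)
    (hψ : ∀ x, ψ x = ζ ^ (Algebra.trace (ZMod p) K x).val)
    (hq : 2 < Fintype.card K)
    {d : ℕ} (hcop : Nat.Coprime d (Fintype.card K - 1)) (hd : 0 < d)
    (hW : ∀ a, ∃ w : ℤ, wsum ψ d a = w) : 1 ≡ d [MOD (p - 1)] := by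
  have hp := (Fact.out : p.Prime)
  have hpr := AddChar.IsPrimitive.of_ne_one hψ1
  obtain ⟨e, -, he⟩ := Nat.exists_mul_mod_eq_one_of_coprime hcop (by omega)
  have hω1 : ω ≠ 1 := by
    intro h
    have := Nat.le_of_dvd one_pos (omega_order res ι ω hω 1 (by rw [h, pow_one]))
    omega
  have hωe : ω = (ω ^ e) ^ d := by
    rw [← pow_mul]
    conv_lhs => rw [← pow_one ω]
    apply omega_pow_eq
    rw [Nat.ModEq, mul_comm e, he, Nat.mod_eq_of_lt (by omega)]
  have hωe1 : (ω ^ e)⁻¹ ≠ 1 := by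
    intro h
    rw [inv_eq_one] at h
    rw [h, one_pow] at hωe
    exact hω1 hωe
  have hM := weil_mellin ψ hcop hd ω (ω ^ e) hω1 hωe
  have hcard : ((Fintype.card K : ℕ) : R) ≠ 0 := by
    rw [Nat.cast_ne_zero]; omega
  have hM0 : ∑ a, ω a * wsum ψ d a ≠ 0 := by
    rw [hM]
    exact mul_ne_zero (gaussSum_ne_zero_of_nontrivial hcard hω1 hpr)
      (gaussSum_ne_zero_of_nontrivial hcard hωe1 hpr)
  -- key
  have key : ∀ k : ℕ, k.Coprime p → (k : K) ^ d = k := by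
    intro k hk
    have hk0 : (k : K) ≠ 0 := by
      intro h
      rw [CharP.cast_eq_zero_iff K p] at h
      exact absurd (Nat.Coprime.eq_one_of_dvd hk.symm h) hp.one_lt.ne'
    obtain ⟨u, hu⟩ := (pow_bij hcop hd).2 (k : K)
    simp only at hu
    have hu0 : u ≠ 0 := by
      rintro rfl
      rw [zero_pow hd.ne'] at hu
      exact hk0 hu.symm
    set t : K := k / u with ht
    have ht0 : t ≠ 0 := div_ne_zero hk0 hu0
    have hWt : ∀ a, wsum ψ d (t * a) = wsum ψ d a := by
      intro a
      obtain ⟨w, hw⟩ := hW a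
      rw [hw, ← wsum_conj ψ ζ hζ hψ a w hw k hk, wsum]
      symm
      refine Fintype.sum_bijective (fun x => u * x) (mulLeft_bijective₀ u hu0) _ _ fun x => ?_
      congr 1
      rw [mul_pow, hu, ht]
      field_simp
    have h1 : ∑ a, ω a * wsum ψ d a = ω t * ∑ a, ω a * wsum ψ d a := by
      rw [Finset.mul_sum]
      symm
      refine Fintype.sum_bijective (fun x => t * x) (mulLeft_bijective₀ t ht0) _ _ fun x => ?_
      rw [hWt, map_mul, mul_assoc]
    have h2 : ω t = 1 := by
      have : (ω t - 1) * ∑ a, ω a * wsum ψ d a = 0 := by rw [sub_mul, ← h1]; ring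
      rcases mul_eq_zero.1 this with h | h
      · exact sub_eq_zero.1 h
      · exact absurd h hM0
    have h3 : ι t = ι 1 := by rw [← hω, h2]; simp
    have h4 : t = 1 := ι.injective h3
    rw [ht, div_eq_one_iff_eq hu0] at h4
    rw [h4, hu, h4]
  obtain ⟨g, hg⟩ := IsCyclic.exists_generator (α := (ZMod p)ˣ)
  have ho := orderOf_eq_card_of_forall_mem_zpowers hg
  rw [Nat.card_eq_fintype_card, ZMod.card_units] at ho
  have h1 : g ^ 1 = g ^ d := by
    ext
    have hgv : ((g : ZMod p).val).Coprime p := ZMod.val_coe_unit_coprime g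
    have := key _ hgv
    have hc : algebraMap (ZMod p) K (g : ZMod p) = (((g : ZMod p).val : ℕ) : K) := by
      conv_lhs => rw [← ZMod.natCast_zmod_val (g : ZMod p)]
      rw [map_natCast]
    rw [← hc, ← map_pow] at this
    have := (algebraMap (ZMod p) K).injective this
    simp [this]
  rw [pow_eq_pow_iff_modEq, ho] at h1
  exact h1

set_option maxHeartbeats 2000000 in
lemma core [CharP K p] [CharP κ p] [CharZero R] (hω : ∀ x, res (ω x) = ι x)
    (hζ : IsPrimitiveRoot ζ p) (hψ1 : ψ ≠ 1)
    (hψ : ∀ x, ψ x = ζ ^ (Algebra.trace (ZMod p) K x).val)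
    (m : ℕ) (hm : 0 < m) (hn : Fintype.card K = p ^ (4 * m))
    {d : ℕ} (hcop : Nat.Coprime d (Fintype.card K - 1)) (hd : 0 < d)
    (hW : ∀ a, a ≠ 0 → wsum ψ d a = 0 ∨ wsum ψ d a = (p : R) ^ (2 * m + 1) ∨
      wsum ψ d a = - (p : R) ^ (2 * m + 1)) : False := by
  have hp := (Fact.out : p.Prime)
  have hp2 := hp.two_le
  have hpr := AddChar.IsPrimitive.of_ne_one hψ1
  have hp4 : 16 ≤ p ^ 4 := by
    calc 16 = 2 ^ 4 := by norm_num
      _ ≤ p ^ 4 := Nat.pow_le_pow_left hp2 4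
  have hq16 : 16 ≤ Fintype.card K := by
    rw [hn]
    exact hp4.trans (Nat.pow_le_pow_right hp.pos (by omega))
  have hW' : ∀ a, wsum ψ d a = 0 ∨ wsum ψ d a = (p : R) ^ (2 * m + 1) ∨
      wsum ψ d a = - (p : R) ^ (2 * m + 1) := by
    intro a
    by_cases ha : a = 0
    · left
      subst ha
      have := sum_psi ψ hpr 1
      rw [if_neg one_ne_zero] at this
      rw [← this, wsum]
      exact Fintype.sum_bijective _ (pow_bij hcop hd) _ _ fun x => by simp
    · exact hW a ha
  -- geometric sum
  set S : ℕ := ∑ i ∈ Finset.range m, (p ^ 4) ^ i with hS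
  have hSq : (p ^ 4 - 1) * S = Fintype.card K - 1 := by
    rw [hn, pow_mul]
    have := Nat.geomSum_eq (m := p ^ 4) (by omega) m
    rw [hS, this]
    exact Nat.mul_div_cancel' (by simpa using Nat.sub_dvd_pow_sub_pow (p ^ 4) 1 m)
  have hSpos : 0 < S := by
    rcases Nat.eq_zero_or_pos S with h | h
    · rw [h] at hSq; omega
    · exact h
  have hdvd : p ^ 4 - 1 ∣ Fintype.card K - 1 := ⟨S, hSq.symm⟩
  have hd1 : 1 ≡ d [MOD (p - 1)] := by
    refine d_modEq_one res ι ω ψ ζ hω hζ hψ1 hψ (by omega) hcop hd fun a => ?_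
    rcases hW' a with h | h | h
    · exact ⟨0, by simp [h]⟩
    · exact ⟨(p : ℤ) ^ (2 * m + 1), by simp [h]⟩
    · exact ⟨-(p : ℤ) ^ (2 * m + 1), by simp [h]⟩
  have hWd : ∀ a, (p : R) ^ (2 * m + 1) ∣ wsum ψ d a := by
    intro a
    rcases hW' a with h | h | h <;> simp [h]
  obtain ⟨k, hk⟩ := arith hp d hd1 (Nat.Coprime.coprime_dvd_right hdvd hcop) (by
    intro A B hA hA1 hB hB1 hAB
    have h := dsum_ineq res ι ω ψ ζ hω hζ hψ1 hψ (4 * m) (2 * m + 1) hn (by omega) hcop hd hWd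
      (A * S) (B * S) (by positivity) (by rw [← hSq]; exact Nat.mul_lt_mul_of_pos_right hA1 hSpos)
      (by positivity) (by rw [← hSq]; exact Nat.mul_lt_mul_of_pos_right hB1 hSpos)
      (by rw [← hSq, ← mul_assoc]; exact hAB.mul_right' S)
    rw [hS, dsum_repeat hp.one_lt 4 A (by omega) m, dsum_repeat hp.one_lt 4 B (by omega) m] at h
    by_contra hcon
    push Not at hcon
    have h2 : m * (dsum p A + 2 * (p - 1)) ≤ m * dsum p B := Nat.mul_le_mul_left m hcon
    have h3 : 0 < p - 1 := by omega
    nlinarith)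
  -- moments
  set c : R := (p : R) ^ (2 * m + 1) with hc
  have h3 : ∑ a, wsum ψ d a ^ 3 = c ^ 2 * ∑ a, wsum ψ d a := by
    rw [Finset.mul_sum]
    refine Finset.sum_congr rfl fun a _ => ?_
    rcases hW' a with h | h | h <;> rw [h] <;> ring
  rw [first_moment ψ hpr hd, third_moment ψ hpr hcop hd] at h3
  set T := Finset.univ.filter fun u : K => 1 + u ^ d + (-1 - u) ^ d = 0 with hT
  have h4 : (p ^ (4 * m)) ^ 2 * T.card = (p ^ (2 * m + 1)) ^ 2 * p ^ (4 * m) := by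
    rw [hn, hc] at h3
    exact_mod_cast h3
  have h5 : T.card = p ^ 2 := by
    have : (p ^ (4 * m)) ^ 2 * T.card = (p ^ (4 * m)) ^ 2 * p ^ 2 := by
      rw [h4]; ring
    exact Nat.eq_of_mul_eq_mul_left (by positivity) this
  -- fixed points
  have hfix : ∀ u : K, u ^ (p ^ 4) = u → u ∈ T := by
    have hpow : ∀ u : K, u ^ (p ^ 4) = u → u ^ d = u ^ p ^ k := by
      intro u hu
      by_cases hu0 : u = 0
      · subst hu0; rw [zero_pow hd.ne', zero_pow (pow_ne_zero _ hp.ne_zero)]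
      have h1 : u ^ (p ^ 4 - 1) = 1 := by
        have : u ^ (p ^ 4 - 1) * u = 1 * u := by
          rw [← pow_succ, Nat.sub_add_cancel (by omega), hu, one_mul]
        exact mul_right_cancel₀ hu0 this
      have ho := orderOf_dvd_of_pow_eq_one h1
      rw [← pow_mod_orderOf, ← pow_mod_orderOf u (p ^ k)]
      congr 1
      exact hk.of_dvd ho
    intro u hu
    rw [hT, Finset.mem_filter]
    refine ⟨Finset.mem_univ _, ?_⟩
    have hu' : (-1 - u) ^ (p ^ 4) = -1 - u := by
      have : (-1 - u) = -(1 + u) := by ring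
      rw [this]
      have h1 : (-(1 + u)) ^ p ^ 4 = (0 - (1 + u)) ^ p ^ 4 := by ring
      rw [h1, sub_pow_char_pow, add_pow_char_pow, hu, zero_pow (by positivity)]
      ring
    rw [hpow u hu, hpow _ hu']
    have h1 : (1 : K) = 1 ^ p ^ k := by simp
    nth_rw 1 [h1]
    rw [← add_pow_char_pow, ← add_pow_char_pow]
    have : (1 + u + (-1 - u)) = (0 : K) := by ring
    rw [this, zero_pow (pow_ne_zero _ hp.ne_zero)]
  obtain ⟨g, hg⟩ := IsCyclic.exists_generator (α := Kˣ)
  have ho := orderOf_eq_card_of_forall_mem_zpowers hg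
  rw [Nat.card_eq_fintype_card, Fintype.card_units, ← hSq] at ho
  have ho2 : orderOf (g ^ S) = p ^ 4 - 1 := by
    rw [orderOf_pow_of_dvd hSpos.ne' (by rw [ho]; exact Dvd.intro_left _ rfl), ho]
    exact Nat.mul_div_cancel _ hSpos
  have h6 : p ^ 4 - 1 ≤ T.card := by
    have : ((Finset.range (p ^ 4 - 1)).image fun i => ((g ^ S) ^ i : Kˣ).val).card = p ^ 4 - 1 := by
      rw [Finset.card_image_of_injOn, Finset.card_range]
      intro i hi j hj hij
      simp only [Finset.coe_range, Set.mem_Iio] at hi hj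
      have := Units.ext hij
      exact pow_injOn_Iio_orderOf (by rwa [ho2]) (by rwa [ho2]) this
    rw [← this]
    apply Finset.card_le_card
    intro y hy
    obtain ⟨i, -, rfl⟩ := Finset.mem_image.1 hy
    apply hfix
    rw [← Units.val_pow_eq_pow_val]
    congr 1
    have h1 : ((g ^ S) ^ i) ^ (p ^ 4 - 1) = 1 := by
      rw [← pow_mul, mul_comm, pow_mul, ← ho2, pow_orderOf_eq_one, one_pow]
    have h2 : p ^ 4 = (p ^ 4 - 1) + 1 := by omega
    rw [h2, pow_succ, h1, one_mul]
  rw [h5] at h6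
  have h7 : p ^ 4 = p ^ 2 * p ^ 2 := by ring
  have h8 : 4 ≤ p ^ 2 := by nlinarith
  have h9 : 4 * p ^ 2 ≤ p ^ 4 := by rw [h7]; exact Nat.mul_le_mul_right _ h8
  omega

end Core

section Setup

lemma exists_val (p : ℕ) (hp : p.Prime) : ∃ V : ValuationSubring ℂ, (p : ℂ) ∈ V.nonunits := by
  let A : Subring ℂ := (Int.castRingHom ℂ).range
  let P : A := ⟨(p : ℂ), ⟨(p : ℤ), by simp⟩⟩
  obtain ⟨V, -, hV⟩ := Ideal.image_subset_nonunits_valuationSubring (K := ℂ) (A := A)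
    (Ideal.span {P}) (by
      intro h
      rw [Ideal.span_singleton_eq_top] at h
      obtain ⟨⟨b, ⟨z, hz⟩⟩, hb⟩ := h.exists_right_inv
      have h1 : (p : ℂ) * b = 1 := congrArg Subtype.val hb
      rw [← hz] at h1
      have h2 : (p : ℤ) * z = 1 := by
        have : (p : ℂ) * (z : ℂ) = 1 := by simpa using h1
        exact_mod_cast this
      have h3 := Int.isUnit_iff.1 (IsUnit.of_mul_eq_one _ h2)
      have := hp.two_le
      omega)
  refine ⟨V, hV ⟨P, Ideal.mem_span_singleton_self P, rfl⟩⟩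

lemma mem_of_pow_eq_one (V : ValuationSubring ℂ) (x : ℂ) (n : ℕ) (hn : 0 < n) (h : x ^ n = 1) :
    x ∈ V := by
  rw [← V.valuation_le_one_iff]
  have h1 : V.valuation x ^ n = 1 := by rw [← map_pow, h, map_one]
  exact ((pow_eq_one_iff_of_nonneg zero_le' hn.ne').1 h1).le

lemma exists_prim (V : ValuationSubring ℂ) (n : ℕ) (hn : 0 < n) :
    ∃ x : V, IsPrimitiveRoot x n ∧ (x : ℂ) = Complex.exp (2 * Real.pi * Complex.I / n) := by
  have h := Complex.isPrimitiveRoot_exp n hn.ne'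
  refine ⟨⟨_, mem_of_pow_eq_one V _ n hn h.pow_eq_one⟩, ?_, rfl⟩
  exact IsPrimitiveRoot.of_map_of_injective (f := V.subtype) h Subtype.val_injective

lemma exists_setup {p : ℕ} [Fact p.Prime] (V : ValuationSubring ℂ) (hV : (p : ℂ) ∈ V.nonunits)
    (K : Type) [Field K] [Fintype K] [Algebra (ZMod p) K] :
    CharP (IsLocalRing.ResidueField V) p ∧
    ∃ (ι : K →+* IsLocalRing.ResidueField V) (ω : MulChar K V),
      ∀ x, IsLocalRing.residue V (ω x) = ι x := by
  have hp := (Fact.out : p.Prime)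
  set res := IsLocalRing.residue V with hres
  have hp0 : ((p : ℕ) : IsLocalRing.ResidueField V) = 0 := by
    have h1 : res (p : V) = 0 := by
      rw [hres, IsLocalRing.residue_eq_zero_iff]
      rw [← V.coe_mem_nonunits_iff]
      simpa using hV
    simpa using h1
  haveI hch : CharP (IsLocalRing.ResidueField V) p := by
    have := (CharP.charP_iff_prime_eq_zero hp (R := IsLocalRing.ResidueField V)).2 hp0
    exact this
  refine ⟨hch, ?_⟩
  letI : Algebra (ZMod p) (IsLocalRing.ResidueField V) := ZMod.algebra _ p
  have hq1 : 1 < Fintype.card K := Fintype.one_lt_card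
  set N := Fintype.card K - 1 with hN
  have hNpos : 0 < N := by omega
  obtain ⟨x, hx, -⟩ := exists_prim V N hNpos
  have hprod := Polynomial.X_pow_sub_one_eq_prod hNpos hx
  have hprod2 := congrArg (Polynomial.map res) hprod
  simp only [Polynomial.map_sub, Polynomial.map_pow, Polynomial.map_X, Polynomial.map_one,
    Polynomial.map_prod, Polynomial.map_C] at hprod2
  have hlift : ∀ y : IsLocalRing.ResidueField V, y ^ N = 1 → ∃ z : V, z ^ N = 1 ∧ res z = y := by
    intro y hy
    have h1 := congrArg (Polynomial.eval y) hprod2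
    rw [Polynomial.eval_prod] at h1
    simp [hy] at h1
    symm at h1
    rw [Finset.prod_eq_zero_iff] at h1
    obtain ⟨z, hz, hz2⟩ := h1
    exact ⟨z, (Polynomial.mem_nthRootsFinset hNpos _).1 hz, (sub_eq_zero.1 hz2).symm⟩
  have hsplit : (Polynomial.map (algebraMap (ZMod p) (IsLocalRing.ResidueField V))
      (Polynomial.X ^ Fintype.card K - Polynomial.X)).Splits := by
    have : Polynomial.map (algebraMap (ZMod p) (IsLocalRing.ResidueField V))
      (Polynomial.X ^ Fintype.card K - Polynomial.X) = Polynomial.X * (Polynomial.X ^ N - 1) := by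
      simp only [Polynomial.map_sub, Polynomial.map_pow, Polynomial.map_X]
      rw [mul_sub, ← pow_succ', hN, Nat.sub_add_cancel hq1.le, mul_one]
    rw [this, hprod2]
    exact Polynomial.Splits.X.mul (Polynomial.Splits.prod fun i _ => Polynomial.Splits.X_sub_C _)
  haveI := FiniteField.isSplittingField_sub K (ZMod p)
  let ι := (Polynomial.IsSplittingField.lift K
    (Polynomial.X ^ Fintype.card K - Polynomial.X : Polynomial (ZMod p)) hsplit).toRingHom
  refine ⟨ι, ?_⟩
  obtain ⟨g, hg⟩ := IsCyclic.exists_generator (α := Kˣ)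
  have hcu : Fintype.card Kˣ = N := Fintype.card_units K
  have hgN : (g : K) ^ N = 1 := by
    rw [← hcu, ← Units.val_pow_eq_pow_val, pow_card_eq_one]; simp
  obtain ⟨z, hz, hz2⟩ := hlift (ι g) (by rw [← map_pow, hgN, map_one])
  let zu : Vˣ := Units.ofPowEqOne z N hz hNpos.ne'
  have hzu : zu ∈ rootsOfUnity (Fintype.card Kˣ) V := by
    rw [mem_rootsOfUnity, hcu]
    exact Units.pow_ofPowEqOne hz hNpos.ne'
  refine ⟨MulChar.ofRootOfUnity hzu hg, ?_⟩
  have hspec := MulChar.ofRootOfUnity_spec hzu hg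
  set ω := MulChar.ofRootOfUnity hzu hg
  have hspec' : ω (g : K) = z := hspec
  intro y
  by_cases hy : y = 0
  · subst hy
    rw [MulChar.map_zero, map_zero, map_zero]
  · obtain ⟨i, hi⟩ := (mem_powers_iff_mem_zpowers (x := g)).2 (hg (Units.mk0 y hy))
    have : y = (g : K) ^ i := by
      have := congrArg Units.val hi
      simpa using this.symm
    rw [this, map_pow, map_pow, map_pow, hspec', hz2]

end Setup

lemma final_nat (p : ℕ) [Fact p.Prime] (K : Type) [Field K] [Fintype K] [CharP K p]
    [Algebra (ZMod p) K] (m : ℕ) (hm : 0 < m) (hn : Fintype.card K = p ^ (4 * m))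
    {d : ℕ} (hcop : Nat.Coprime d (Fintype.card K - 1)) (hd : 0 < d)
    (hW : ∀ a : K, a ≠ 0 → ∑ x : K, canonicalAddChar p K (x ^ d + a * x) = 0 ∨
      ∑ x : K, canonicalAddChar p K (x ^ d + a * x) = (p : ℂ) ^ (2 * m + 1) ∨
      ∑ x : K, canonicalAddChar p K (x ^ d + a * x) = - (p : ℂ) ^ (2 * m + 1)) : False := by
  have hp := (Fact.out : p.Prime)
  obtain ⟨V, hV⟩ := exists_val p hp
  obtain ⟨hch, ι, ω, hω⟩ := exists_setup V hV K
  obtain ⟨ζ, hζ, hζe⟩ := exists_prim V p hp.pos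
  let ψ : AddChar K V := (AddChar.zmodChar p hζ.pow_eq_one).compAddMonoidHom
    (Algebra.trace (ZMod p) K).toAddMonoidHom
  have hψ : ∀ x, ψ x = ζ ^ (Algebra.trace (ZMod p) K x).val := fun x => rfl
  have hψc : ∀ x, ((ψ x : V) : ℂ) = canonicalAddChar p K x := by
    intro x
    rw [hψ, canonicalAddChar]
    push_cast
    rw [hζe, ← Complex.exp_nat_mul]
    congr 1; ring
  have hψ1 : ψ ≠ 1 := by
    intro h
    obtain ⟨x, hx⟩ := Algebra.trace_surjective (ZMod p) K 1
    have h1 : ψ x = 1 := by rw [h]; rfl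
    rw [hψ, hx, ZMod.val_one'' hp.one_lt.ne', pow_one] at h1
    exact hζ.ne_one hp.one_lt h1
  have hwc : ∀ a, ((wsum ψ d a : V) : ℂ) = ∑ x : K, canonicalAddChar p K (x ^ d + a * x) := by
    intro a
    rw [wsum]
    push_cast
    simp_rw [hψc]
  haveI : CharZero V := ⟨fun a b h => by
    have := congrArg (Subtype.val) h
    exact_mod_cast this⟩
  refine core (IsLocalRing.residue V) ι ω ψ ζ hω hζ hψ1 hψ m hm hn hcop hd fun a ha => ?_
  rcases hW a ha with h | h | h
  · left; apply Subtype.ext; rw [hwc, h]; rfl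
  · right; left; apply Subtype.ext; rw [hwc, h]; simp
  · right; right; apply Subtype.ext; rw [hwc, h]; simp

theorem stmt6 (p : ℕ) [Fact p.Prime] (K : Type) [Field K] [Fintype K] [CharP K p]
    [Algebra (ZMod p) K]
    (h4 : 4 ∣ Module.finrank (ZMod p) K)
    (d : ℤ) (hd : Int.gcd d ((Fintype.card K : ℤ) - 1) = 1) :
    weilValues p K d ≠
      {0, (p : ℂ) * (Real.sqrt (Fintype.card K) : ℂ),
        -((p : ℂ) * (Real.sqrt (Fintype.card K) : ℂ))} := by
  intro hval
  have hp := (Fact.out : p.Prime)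
  obtain ⟨m, hm⟩ := h4
  have hn : Fintype.card K = p ^ (4 * m) := by
    rw [Module.card_eq_pow_finrank (K := ZMod p) (V := K), ZMod.card, hm]
  haveI : Module.Finite (ZMod p) K := Module.Finite.of_finite
  have hmpos : 0 < m := by
    have : 0 < Module.finrank (ZMod p) K := Module.finrank_pos
    omega
  have hq16 : 16 ≤ Fintype.card K := by
    rw [hn]
    calc 16 = 2 ^ 4 := by norm_num
      _ ≤ p ^ 4 := Nat.pow_le_pow_left hp.two_le 4
      _ ≤ p ^ (4 * m) := Nat.pow_le_pow_right hp.pos (by omega)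
  have hsqrt : (p : ℂ) * (Real.sqrt (Fintype.card K) : ℂ) = (p : ℂ) ^ (2 * m + 1) := by
    have : Real.sqrt (Fintype.card K) = (p : ℝ) ^ (2 * m) := by
      rw [hn]
      have : (((p ^ (4 * m) : ℕ)) : ℝ) = ((p : ℝ) ^ (2 * m)) ^ 2 := by push_cast; ring
      rw [this, Real.sqrt_sq (by positivity)]
    rw [this]; push_cast; ring
  set N : ℤ := (Fintype.card K : ℤ) - 1 with hN
  have hNpos : 0 < N := by omega
  have hNn : ((Fintype.card K - 1 : ℕ) : ℤ) = N := by omega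
  obtain ⟨D, hD⟩ : ∃ D : ℕ, (D : ℤ) = d % N := ⟨(d % N).toNat, by
    rw [Int.toNat_of_nonneg (Int.emod_nonneg _ hNpos.ne')]⟩
  have hcop : Nat.Coprime D (Fintype.card K - 1) := by
    have h1 : Int.gcd (D : ℤ) N = 1 := by
      rw [hD, Int.gcd_emod, hd]
    rw [← hNn, Int.gcd_natCast_natCast] at h1
    exact h1
  have hDpos : 0 < D := by
    rcases Nat.eq_zero_or_pos D with h | h
    · rw [h, Nat.coprime_zero_left] at hcop; omega
    · exact h
  have hd0 : d ≠ 0 := by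
    rintro rfl
    rw [Int.zero_emod] at hD
    omega
  have hpow : ∀ x : K, x ^ d = x ^ D := by
    intro x
    by_cases hx : x = 0
    · subst hx; rw [zero_zpow _ hd0, zero_pow hDpos.ne']
    · have h1 : x ^ N = 1 := by
        rw [← hNn, zpow_natCast]
        exact FiniteField.pow_card_sub_one_eq_one x hx
      conv_lhs => rw [← Int.emod_add_mul_ediv d N]
      rw [zpow_add₀ hx, zpow_mul, h1, one_zpow, mul_one, ← hD, zpow_natCast]
  refine final_nat p K m hmpos hn hcop hDpos fun a ha => ?_
  have hmem : weilSum p K d a ∈ weilValues p K d := ⟨a, ha, rfl⟩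
  rw [hval, hsqrt] at hmem
  have hws : weilSum p K d a = ∑ x : K, canonicalAddChar p K (x ^ D + a * x) := by
    simp only [weilSum, hpow]
  rw [hws] at hmem
  simpa using hmem
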